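/- Let p and q be coprime square-free integers with p ≡ q ≡ 1 (mod 4), p ≥ 17 and q ≥ 17, and let K = ℚ(√p, √q). Then the element α = 7 + ((1+√p)/2)² + ((1+√q)/2)² of O_K has length exactly 6 (it is a sum of 6 squares in O_K but not of 5); in particular the Pythagoras number of O_K is at least 6. -/

import Mathlib

/-! The sum of six squares is `2² + 1² + 1² + 1² + ((1+√p)/2)² + ((1+√q)/2)²`.

For the lower bound, write an integer of `K` as `x = (a + b√p + c√q + d√(pq))/4`. The relative traces
of `x` to the three quadratic subfields are integers of these subfields, and each of `p`, `q`, `pq` is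
squarefree and `≡ 1 (mod 4)`; hence `a, b, c, d` are rational integers of the same parity
(`integral_coeffs`). If `α = ∑ xᵢ²` with five terms, comparing rational parts gives
`∑ (aᵢ² + p bᵢ² + q cᵢ² + pq dᵢ²) = 120 + 4p + 4q`, which is less than `pq` as `p, q ≥ 17`.
So every `dᵢ` vanishes and `xᵢ = (aᵢ + vᵢ√p + wᵢ√q)/2` with new integers satisfying
`aᵢ ≡ vᵢ + wᵢ (mod 2)`, and
`∑ (aᵢ² + p vᵢ² + q wᵢ²) = 30 + p + q`, `∑ aᵢvᵢ = ∑ aᵢwᵢ = 1`, `∑ vᵢwᵢ = 0`.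
The congruence makes `∑ vᵢ²` and `∑ wᵢ²` odd, and the size of `p, q` makes both equal to `1`. Thus
`v` and `w` are each supported at one index, these indices differ, and `aᵢ = ±1` there. The other
three `aᵢ` are even with squares summing to `28`, although `7` is not a sum of three squares
(`no_five`). -/

/-- The totally real biquadratic field `ℚ(√p, √q)` as a subfield of `ℝ`. -/
noncomputable def biqField (p q : ℕ) : IntermediateField ℚ ℝ :=
  IntermediateField.adjoin ℚ {Real.sqrt p, Real.sqrt q}

/-- The ring of integers of a subfield `K` of `ℝ`, viewed as the set of elements
of `K` that are integral over `ℤ`. -/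
def ringOfInt (K : IntermediateField ℚ ℝ) : Set ℝ :=
  {x : ℝ | x ∈ K ∧ IsIntegral ℤ x}

/-- `α` is a sum of `n` squares of elements of `S`. -/
def SumOfNSquaresIn (S : Set ℝ) (n : ℕ) (α : ℝ) : Prop :=
  ∃ x : Fin n → ℝ, (∀ i, x i ∈ S) ∧ α = ∑ i, x i ^ 2

/-- `α` is a sum of squares of elements of `S`. -/
def IsSumOfSquaresIn (S : Set ℝ) (α : ℝ) : Prop := ∃ n, SumOfNSquaresIn S n α

/-- `K` is a totally real biquadratic field. -/
def IsBiquadratic (K : IntermediateField ℚ ℝ) : Prop :=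
  ∃ p q : ℕ, Squarefree p ∧ Squarefree q ∧ 1 < p ∧ 1 < q ∧ p ≠ q ∧ K = biqField p q

/-! ### Integers of quadratic and biquadratic fields -/

/-- The conjugate over `L` of an algebraic integer of `L(s)`, where `s² ∈ L` and `s ∉ L`, is again an
algebraic integer: both are roots of the same monic integer polynomial. -/
lemma conj_integral (L : IntermediateField ℚ ℝ) (s x y : ℝ) (hs : s ^ 2 ∈ L) (hsL : s ∉ L)
    (hx : x ∈ L) (hy : y ∈ L) (h : IsIntegral ℤ (x + y * s)) : IsIntegral ℤ (x - y * s) := by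
  have key : ∀ P : Polynomial ℤ, ∃ A ∈ L, ∃ B ∈ L,
      Polynomial.aeval (x + y * s) P = A + B * s ∧
      Polynomial.aeval (x - y * s) P = A - B * s := by
    intro P
    induction P using Polynomial.induction_on with
    | C a =>
      refine ⟨(a : ℝ), by simp, 0, zero_mem _, ?_, ?_⟩ <;> simp
    | add P Q hP hQ =>
      obtain ⟨A, hA, B, hB, h1, h2⟩ := hP
      obtain ⟨A', hA', B', hB', h1', h2'⟩ := hQ
      refine ⟨A + A', add_mem hA hA', B + B', add_mem hB hB', ?_, ?_⟩
      · rw [map_add, h1, h1']; ring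
      · rw [map_add, h2, h2']; ring
    | monomial n a ih =>
      obtain ⟨A, hA, B, hB, h1, h2⟩ := ih
      refine ⟨A * x + B * y * s ^ 2, add_mem (mul_mem hA hx) (mul_mem (mul_mem hB hy) hs),
        A * y + B * x, add_mem (mul_mem hA hy) (mul_mem hB hx), ?_, ?_⟩
      · rw [pow_succ, ← mul_assoc, map_mul, h1, Polynomial.aeval_X]; ring
      · rw [pow_succ, ← mul_assoc, map_mul, h2, Polynomial.aeval_X]; ring
  obtain ⟨P, hPm, hP⟩ := h
  obtain ⟨A, hA, B, hB, h1, h2⟩ := key P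
  refine ⟨P, hPm, ?_⟩
  rw [← Polynomial.aeval_def] at hP ⊢
  rw [hP] at h1
  have hB0 : B = 0 := by
    by_contra hne
    apply hsL
    have : s = -A / B := by field_simp; linarith
    rw [this]
    exact div_mem (neg_mem hA) hB
  subst hB0
  rw [h2]; linarith

lemma IsIntegral.of_eq {x y : ℝ} (h : IsIntegral ℤ x) (e : y = x) : IsIntegral ℤ y := e ▸ h

lemma rat_of_integral (r : ℚ) (h : IsIntegral ℤ (r : ℝ)) : ∃ n : ℤ, (n : ℚ) = r := by
  have h' : IsIntegral ℤ r := by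
    refine (isIntegral_algHom_iff ((algebraMap ℚ ℝ).toIntAlgHom) (algebraMap ℚ ℝ).injective).1 ?_
    simpa using h
  exact IsIntegrallyClosed.isIntegral_iff.1 h'

lemma rat_mem (L : IntermediateField ℚ ℝ) (r : ℚ) : (r : ℝ) ∈ L := by
  simp

/-- A rational whose square becomes integral after multiplication by a squarefree `m` is integral. -/
lemma rat_int_of_squarefree (m : ℕ) (hm : Squarefree m) (b : ℚ) (n : ℤ)
    (h : (m : ℚ) * b ^ 2 = n) : ∃ k : ℤ, (k : ℚ) = b := by
  have hd : (b.den : ℚ) ≠ 0 := by exact_mod_cast b.den_nz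
  have h1 : (m : ℤ) * b.num ^ 2 = n * (b.den : ℤ) ^ 2 := by
    have : (m : ℚ) * (b.num : ℚ) ^ 2 = n * (b.den : ℚ) ^ 2 := by
      rw [← h]
      nth_rewrite 2 [← Rat.num_div_den b]
      field_simp
    exact_mod_cast this
  have hc : IsCoprime ((b.den : ℤ) ^ 2) (b.num ^ 2) := by
    apply IsCoprime.pow
    rw [Int.isCoprime_iff_gcd_eq_one, Int.gcd_comm]
    simpa [Int.gcd] using b.reduced
  have h2 : ((b.den : ℤ) ^ 2) ∣ (m : ℤ) := hc.dvd_of_dvd_mul_right ⟨n, by rw [h1]; ring⟩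
  have h3 : b.den * b.den ∣ m := by
    rw [← sq]; exact_mod_cast h2
  have h4 : b.den = 1 := Nat.isUnit_iff.1 (hm _ h3)
  exact ⟨b.num, (Rat.den_eq_one_iff b).1 h4⟩

lemma sqrt_not_rat (m : ℕ) (hm : ¬ IsSquare m) (r : ℚ) : Real.sqrt m ≠ r := by
  intro h
  have := irrational_sqrt_natCast_iff.2 hm
  exact this ⟨r, h.symm⟩

lemma not_sq_of_squarefree (m : ℕ) (hm : Squarefree m) (h1 : 1 < m) : ¬ IsSquare m := by
  rintro ⟨k, rfl⟩
  have := Nat.isUnit_iff.1 (hm k dvd_rfl)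
  subst this
  omega

/-- Integers of `ℚ(√m)` for squarefree `m ≡ 1 (mod 4)`. -/
lemma quad_integral (m : ℕ) (hm : Squarefree m) (h1 : 1 < m) (h4 : m % 4 = 1) (a b : ℚ)
    (h : IsIntegral ℤ ((a : ℝ) + b * Real.sqrt m)) :
    ∃ A B : ℤ, (A : ℚ) = 2 * a ∧ (B : ℚ) = 2 * b ∧ A % 2 = B % 2 := by
  have hsq : Real.sqrt m ^ 2 = m := Real.sq_sqrt (by positivity)
  have hc := conj_integral ⊥ (Real.sqrt m) a b
    (by rw [hsq]; exact_mod_cast rat_mem ⊥ (m : ℚ))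
    (by
      rw [IntermediateField.mem_bot]
      rintro ⟨r, hr⟩
      exact sqrt_not_rat m (not_sq_of_squarefree m hm h1) r (by simpa using hr.symm))
    (rat_mem _ _) (rat_mem _ _) h
  obtain ⟨A, hA⟩ := rat_of_integral (2 * a) (by
    refine (h.add hc).of_eq ?_
    push_cast; ring)
  obtain ⟨N, hN⟩ := rat_of_integral (a ^ 2 - m * b ^ 2) (by
    refine (h.mul hc).of_eq ?_
    push_cast; linear_combination ((b : ℝ) ^ 2) * hsq)
  obtain ⟨B, hB⟩ := rat_int_of_squarefree m hm (2 * b) (A ^ 2 - 4 * N) (by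
    push_cast; rw [hA, hN]; ring)
  refine ⟨A, B, hA, hB, ?_⟩
  have h5 : A ^ 2 - m * B ^ 2 = 4 * N := by
    have : (A : ℚ) ^ 2 - m * B ^ 2 = 4 * N := by rw [hA, hB, hN]; ring
    exact_mod_cast this
  have h6 : Even (A ^ 2 - m * B ^ 2) := ⟨2 * N, by rw [h5]; ring⟩
  have hmo : ¬ Even (m : ℤ) := by rw [Int.even_iff]; omega
  rw [Int.even_sub, Int.even_mul, Int.even_pow' two_ne_zero, Int.even_pow' two_ne_zero] at h6
  simp only [Int.even_iff] at h6 hmo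
  omega

/-- `√n ∉ ℚ(√m)`. -/
lemma sqrt_not_mem_quad (m n : ℕ) (hm : ¬ IsSquare m) (hn : ¬ IsSquare n)
    (hmn : ¬ IsSquare (m * n)) (a b : ℚ) : Real.sqrt n ≠ a + b * Real.sqrt m := by
  intro h
  have hsm : Real.sqrt m ^ 2 = m := Real.sq_sqrt (by positivity)
  have hsn : Real.sqrt n ^ 2 = n := Real.sq_sqrt (by positivity)
  have hab : a * b = 0 := by
    by_contra hne
    have hne' : (2 * a * b : ℝ) ≠ 0 := by
      have : (2 * a * b : ℚ) ≠ 0 := by rw [mul_assoc]; exact mul_ne_zero two_ne_zero hne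
      exact_mod_cast this
    apply sqrt_not_rat m hm ((n - a ^ 2 - b ^ 2 * m) / (2 * a * b))
    push_cast
    rw [eq_div_iff hne']
    rw [← hsn, h]
    linear_combination (-(b : ℝ) ^ 2) * hsm
  rcases mul_eq_zero.1 hab with h0 | h0
  · subst h0
    apply sqrt_not_rat (m * n) hmn (b * m)
    push_cast
    rw [Real.sqrt_mul (by positivity), h]
    linear_combination (b : ℝ) * hsm
  · subst h0
    exact sqrt_not_rat n hn a (by simpa using h)

lemma mem_biqField (p q : ℕ) (x : ℝ) (hx : x ∈ biqField p q) :
    ∃ a b c d : ℚ, x = a + b * √p + c * √q + d * (√p * √q) := by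
  have hsp : √(p:ℝ) ^ 2 = p := Real.sq_sqrt (by positivity)
  have hsq : √(q:ℝ) ^ 2 = q := Real.sq_sqrt (by positivity)
  have hx' : x ∈ (biqField p q).toSubalgebra := hx
  rw [biqField, IntermediateField.adjoin_toSubalgebra_of_isAlgebraic] at hx'
  · clear hx
    induction hx' using Algebra.adjoin_induction with
    | mem x h =>
      rcases h with rfl | rfl
      · exact ⟨0, 1, 0, 0, by simp⟩
      · exact ⟨0, 0, 1, 0, by simp⟩
    | algebraMap r => exact ⟨r, 0, 0, 0, by simp⟩
    | add x y _ _ h1 h2 =>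
      obtain ⟨a, b, c, d, rfl⟩ := h1
      obtain ⟨a', b', c', d', rfl⟩ := h2
      exact ⟨a + a', b + b', c + c', d + d', by push_cast; ring⟩
    | mul x y _ _ h1 h2 =>
      obtain ⟨a, b, c, d, rfl⟩ := h1
      obtain ⟨a', b', c', d', rfl⟩ := h2
      refine ⟨a * a' + p * b * b' + q * c * c' + p * q * d * d',
        a * b' + b * a' + q * (c * d' + d * c'),
        a * c' + c * a' + p * (b * d' + d * b'),
        a * d' + d * a' + b * c' + c * b', ?_⟩
      push_cast
      linear_combination
        ((b : ℝ) * b' + (b * d' + d * b') * √(q : ℝ) + d * d' * √(q : ℝ) ^ 2) * hsp +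
        ((c : ℝ) * c' + (c * d' + d * c') * √(p : ℝ) + d * d' * p) * hsq
  · rintro y (rfl | rfl)
    · refine (IsIntegral.of_pow (n := 2) two_pos ?_).isAlgebraic
      rw [hsp]; exact_mod_cast isIntegral_algebraMap (R := ℚ) (A := ℝ) (x := (p : ℚ))
    · refine (IsIntegral.of_pow (n := 2) two_pos ?_).isAlgebraic
      rw [hsq]; exact_mod_cast isIntegral_algebraMap (R := ℚ) (A := ℝ) (x := (q : ℚ))

lemma sqrt_mem_left (p q : ℕ) : √(p : ℝ) ∈ biqField p q :=
  IntermediateField.subset_adjoin _ _ (by simp)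

lemma sqrt_mem_right (p q : ℕ) : √(q : ℝ) ∈ biqField p q :=
  IntermediateField.subset_adjoin _ _ (by simp)

/-- The quadratic field `ℚ(√m)` is taken to be `biqField m 1`. -/
lemma sqrt_not_mem (m n : ℕ) (hm : ¬ IsSquare m) (hn : ¬ IsSquare n)
    (hmn : ¬ IsSquare (m * n)) : √(n : ℝ) ∉ biqField m 1 := by
  intro h
  obtain ⟨a, b, c, d, h⟩ := mem_biqField _ _ _ h
  apply sqrt_not_mem_quad m n hm hn hmn (a + c) (b + d)
  rw [h]; push_cast; rw [Real.sqrt_one]; ring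

lemma quad_mem (m : ℕ) (a b : ℚ) : (a : ℝ) + b * √m ∈ biqField m 1 :=
  add_mem (rat_mem _ _) (mul_mem (rat_mem _ _) (sqrt_mem_left _ _))

/-- The relative trace to `ℚ(√m)` of an integer of `ℚ(√m, √n)` is an integer. -/
lemma trace_integral (m n : ℕ) (hm : ¬ IsSquare m) (hn : ¬ IsSquare n)
    (hmn : ¬ IsSquare (m * n)) (a b c d : ℚ)
    (h : IsIntegral ℤ ((a + b * √m) + (c + d * √m) * √n : ℝ)) :
    IsIntegral ℤ (((2 * a : ℚ) : ℝ) + ((2 * b : ℚ) : ℝ) * √m) := by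
  have hsn : √(n:ℝ) ^ 2 = n := Real.sq_sqrt (by positivity)
  have hc := conj_integral (biqField m 1) (√n) (a + b * √m) (c + d * √m)
    (by rw [hsn]; exact_mod_cast rat_mem _ (n : ℚ))
    (sqrt_not_mem m n hm hn hmn) (quad_mem _ _ _) (quad_mem _ _ _) h
  refine (h.add hc).of_eq ?_
  push_cast; ring

lemma quad_indep (m : ℕ) (hm : ¬ IsSquare m) (a b : ℚ) (h : (a : ℝ) + b * √m = 0) :
    a = 0 ∧ b = 0 := by
  have hb : b = 0 := by
    by_contra hb
    have hb' : (b : ℝ) ≠ 0 := by exact_mod_cast hb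
    apply sqrt_not_rat m hm (-a / b)
    push_cast
    rw [eq_div_iff hb']; linarith
  subst hb
  exact ⟨by simpa using h, rfl⟩

lemma biq_indep (p q : ℕ) (hp : ¬ IsSquare p) (hq : ¬ IsSquare q) (hpq : ¬ IsSquare (p * q))
    (a b c d : ℚ) (h : (a : ℝ) + b * √p + c * √q + d * (√p * √q) = 0) :
    a = 0 ∧ b = 0 ∧ c = 0 ∧ d = 0 := by
  have h0 : (c : ℝ) + d * √p = 0 := by
    by_contra hne
    apply sqrt_not_mem p q hp hq hpq
    have : √(q : ℝ) = -(a + b * √p) / (c + d * √p) := by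
      rw [eq_div_iff hne]; linarith
    rw [this]
    exact div_mem (neg_mem (quad_mem _ _ _)) (quad_mem _ _ _)
  have h1 : (a : ℝ) + b * √p = 0 := by linear_combination h - √(q : ℝ) * h0
  obtain ⟨hc, hd⟩ := quad_indep p hp _ _ h0
  obtain ⟨ha, hb⟩ := quad_indep p hp _ _ h1
  exact ⟨ha, hb, hc, hd⟩

/-- The coordinates of an integer of `ℚ(√p, √q)` lie in `¼ℤ`, with numerators of equal parity. -/
lemma integral_coeffs (p q : ℕ) (hp : Squarefree p) (hq : Squarefree q) (hcop : Nat.Coprime p q)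
    (hp4 : p % 4 = 1) (hq4 : q % 4 = 1) (hp1 : 1 < p) (hq1 : 1 < q) (x : ℝ)
    (hx : x ∈ ringOfInt (biqField p q)) :
    ∃ a b c d : ℤ, 4 * x = a + b * √p + c * √q + d * (√p * √q) ∧
      a % 2 = b % 2 ∧ a % 2 = c % 2 ∧ a % 2 = d % 2 := by
  obtain ⟨hxK, hxi⟩ := hx
  obtain ⟨a, b, c, d, hxe⟩ := mem_biqField _ _ _ hxK
  have hpq : Squarefree (p * q) := (Nat.squarefree_mul hcop).2 ⟨hp, hq⟩
  have hpq1 : 1 < p * q := by nlinarith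
  have hpq4 : (p * q) % 4 = 1 := by rw [Nat.mul_mod, hp4, hq4]
  have np := not_sq_of_squarefree p hp hp1
  have nq := not_sq_of_squarefree q hq hq1
  have npq := not_sq_of_squarefree _ hpq hpq1
  have nppq : ¬ IsSquare (p * q * p) := by
    rintro ⟨k, hk⟩
    apply nq
    have : p ^ 2 ∣ k ^ 2 := ⟨q, by rw [sq k, ← hk]; ring⟩
    obtain ⟨l, rfl⟩ := (Nat.pow_dvd_pow_iff two_ne_zero).1 this
    refine ⟨l, ?_⟩
    have hp0 : 0 < p * p := by positivity
    apply Nat.eq_of_mul_eq_mul_left hp0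
    linarith
  have hsp : √(p:ℝ) ^ 2 = p := Real.sq_sqrt (by positivity)
  have hspq : √((p * q : ℕ):ℝ) = √p * √q := by
    push_cast; rw [Real.sqrt_mul (by positivity)]
  have t1 := trace_integral p q np nq npq a b c d (by
    refine hxi.of_eq ?_; rw [hxe]; ring)
  have t2 := trace_integral q p nq np (by rwa [mul_comm]) a c b d (by
    refine hxi.of_eq ?_; rw [hxe]; ring)
  -- Here `√q = √(pq) √p / p`.
  have t3 := trace_integral (p * q) p npq np nppq a d b (c / p) (by
    refine hxi.of_eq ?_; rw [hxe, hspq]; push_cast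
    have hp0 : (p : ℝ) ≠ 0 := by positivity
    field_simp
    linear_combination ((c : ℝ) * √(q:ℝ)) * hsp)
  obtain ⟨A, B, hA, hB, hAB⟩ := quad_integral p hp hp1 hp4 _ _ t1
  obtain ⟨A', C, hA', hC, hAC⟩ := quad_integral q hq hq1 hq4 _ _ t2
  obtain ⟨A'', D, hA'', hD, hAD⟩ := quad_integral (p * q) hpq hpq1 hpq4 _ _ t3
  have e1 : A' = A := by exact_mod_cast hA'.trans hA.symm
  have e2 : A'' = A := by exact_mod_cast hA''.trans hA.symm
  subst e1 e2
  refine ⟨A'', B, C, D, ?_, hAB, hAC, hAD⟩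
  have r1 : (A'' : ℝ) = 2 * (2 * a) := by exact_mod_cast hA
  have r2 : (B : ℝ) = 2 * (2 * b) := by exact_mod_cast hB
  have r3 : (C : ℝ) = 2 * (2 * c) := by exact_mod_cast hC
  have r4 : (D : ℝ) = 2 * (2 * d) := by exact_mod_cast hD
  rw [r1, r2, r3, r4, hxe]; ring

lemma half_integral (m : ℕ) (hm : m % 4 = 1) : IsIntegral ℤ ((1 + √(m : ℝ)) / 2) := by
  obtain ⟨k, hk⟩ : ∃ k, m = 4 * k + 1 := ⟨m / 4, by omega⟩
  have hsm : √(m:ℝ) ^ 2 = m := Real.sq_sqrt (by positivity)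
  refine ⟨Polynomial.X ^ 2 - Polynomial.X - Polynomial.C (k : ℤ), by monicity!, ?_⟩
  rw [← Polynomial.aeval_def]
  simp only [map_sub, map_pow, Polynomial.aeval_X, Polynomial.aeval_C]
  have : (m : ℝ) = 4 * k + 1 := by exact_mod_cast hk
  simp only [algebraMap_int_eq, eq_intCast, Int.cast_natCast]
  linear_combination hsm / 4 + this / 4

lemma half_mem (p q m : ℕ) (hm : m % 4 = 1) (h : √(m : ℝ) ∈ biqField p q) :
    (1 + √(m : ℝ)) / 2 ∈ ringOfInt (biqField p q) :=
  ⟨div_mem (add_mem (one_mem _) h) (by exact_mod_cast rat_mem _ (2 : ℚ)), half_integral m hm⟩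

/-- Subtracting `v(1+√p)/2 + w(1+√q)/2` from `x` leaves the rational algebraic integer
`(a - v - w)/2`. -/
lemma parity_of_integral (p q : ℕ) (hp4 : p % 4 = 1) (hq4 : q % 4 = 1) (x : ℝ)
    (hx : IsIntegral ℤ x) (a v w : ℤ) (h : 2 * x = a + v * √p + w * √q) :
    a % 2 = (v + w) % 2 := by
  have iv : IsIntegral ℤ (v : ℝ) := by simpa using isIntegral_algebraMap (R := ℤ) (A := ℝ) (x := v)
  have iw : IsIntegral ℤ (w : ℝ) := by simpa using isIntegral_algebraMap (R := ℤ) (A := ℝ) (x := w)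
  have h1 := (hx.sub (iv.mul (half_integral p hp4))).sub (iw.mul (half_integral q hq4))
  obtain ⟨n, hn⟩ := rat_of_integral ((a - v - w) / 2) (by
    refine h1.of_eq ?_; push_cast; linear_combination -h / 2)
  have : 2 * n = a - v - w := by
    have : (2 * n : ℚ) = a - v - w := by rw [hn]; ring
    exact_mod_cast this
  omega

/-! ### The arithmetic contradiction -/

lemma not_three_squares_seven (x y z : ℤ) : x ^ 2 + y ^ 2 + z ^ 2 ≠ 7 := by
  intro h
  have h8 : ((x : ZMod 8)) ^ 2 + (y : ZMod 8) ^ 2 + (z : ZMod 8) ^ 2 = 7 := by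
    exact_mod_cast congrArg (Int.cast : ℤ → ZMod 8) h
  generalize (x : ZMod 8) = x at h8
  generalize (y : ZMod 8) = y at h8
  generalize (z : ZMod 8) = z at h8
  revert x y z
  decide

lemma not_three_even_squares (x y z : ℤ) (hx : x % 2 = 0) (hy : y % 2 = 0) (hz : z % 2 = 0) :
    x ^ 2 + y ^ 2 + z ^ 2 ≠ 28 := by
  intro h
  obtain ⟨x, rfl⟩ := Int.dvd_of_emod_eq_zero hx
  obtain ⟨y, rfl⟩ := Int.dvd_of_emod_eq_zero hy
  obtain ⟨z, rfl⟩ := Int.dvd_of_emod_eq_zero hz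
  exact not_three_squares_seven x y z (by linarith)

/-- An integer vector of squared length one is `±` a standard basis vector. -/
lemma single_of_sum_sq {v : Fin 5 → ℤ} (h : ∑ i, v i ^ 2 = 1) :
    ∃ i, v i ^ 2 = 1 ∧ ∀ k, k ≠ i → v k = 0 := by
  obtain ⟨i, hi⟩ : ∃ i, v i ≠ 0 := by
    by_contra! hne
    simp [hne] at h
  have h1 : 1 ≤ v i ^ 2 := by have := sq_pos_of_ne_zero hi; omega
  rw [← Finset.add_sum_erase _ _ (Finset.mem_univ i)] at h
  have h2 : 0 ≤ ∑ k ∈ Finset.univ.erase i, v k ^ 2 := Finset.sum_nonneg fun _ _ => sq_nonneg _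
  refine ⟨i, by omega, fun k hk => ?_⟩
  have h3 := (Finset.sum_eq_zero_iff_of_nonneg fun _ _ => sq_nonneg _).1
    (show ∑ k ∈ Finset.univ.erase i, v k ^ 2 = 0 by omega) k (by simp [hk])
  exact pow_eq_zero_iff two_ne_zero |>.1 h3

lemma sum_sq_odd (a v w : Fin 5 → ℤ) (hpar : ∀ i, a i % 2 = (v i + w i) % 2)
    (hav : ∑ i, a i * v i = 1) (hvw : ∑ i, v i * w i = 0) : (∑ i, v i ^ 2) % 2 = 1 := by
  have : (∑ i, v i ^ 2) + ∑ i, v i * w i ≡ ∑ i, a i * v i [ZMOD 2] := by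
    rw [← Finset.sum_add_distrib]
    refine Int.ModEq.sum fun i _ => ?_
    have h := (Int.ModEq.mul_right (v i) (hpar i : a i ≡ v i + w i [ZMOD 2])).symm
    convert h using 1; ring
  rw [hav, hvw, add_zero] at this
  exact this

lemma no_five (p q : ℕ) (hp17 : 17 ≤ p) (hq17 : 17 ≤ q) (a v w : Fin 5 → ℤ)
    (hpar : ∀ i, a i % 2 = (v i + w i) % 2)
    (hsum : ∑ i, a i ^ 2 + p * ∑ i, v i ^ 2 + q * ∑ i, w i ^ 2 = 30 + p + q)
    (hav : ∑ i, a i * v i = 1) (haw : ∑ i, a i * w i = 1) (hvw : ∑ i, v i * w i = 0) : False := by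
  have oV := sum_sq_odd a v w hpar hav hvw
  have oW := sum_sq_odd a w v (by simpa only [add_comm] using hpar) haw
    (by simpa only [mul_comm] using hvw)
  have nA : 0 ≤ ∑ i, a i ^ 2 := Finset.sum_nonneg fun _ _ => sq_nonneg _
  have nV : 0 ≤ ∑ i, v i ^ 2 := Finset.sum_nonneg fun _ _ => sq_nonneg _
  have nW : 0 ≤ ∑ i, w i ^ 2 := Finset.sum_nonneg fun _ _ => sq_nonneg _
  have hp' : (17 : ℤ) ≤ p := by exact_mod_cast hp17
  have hq' : (17 : ℤ) ≤ q := by exact_mod_cast hq17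
  have V1 : ∑ i, v i ^ 2 = 1 := by
    by_contra hne
    have : 3 ≤ ∑ i, v i ^ 2 := by omega
    have : 1 ≤ ∑ i, w i ^ 2 := by omega
    nlinarith
  have W1 : ∑ i, w i ^ 2 = 1 := by
    by_contra hne
    have : 3 ≤ ∑ i, w i ^ 2 := by omega
    nlinarith
  have A30 : ∑ i, a i ^ 2 = 30 := by rw [V1, W1] at hsum; linarith
  obtain ⟨i, hvi, hv⟩ := single_of_sum_sq V1
  obtain ⟨j, hwj, hw⟩ := single_of_sum_sq W1
  rw [Fintype.sum_eq_single i (fun k hk => by rw [hv k hk, mul_zero])] at hav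
  rw [Fintype.sum_eq_single j (fun k hk => by rw [hw k hk, mul_zero])] at haw
  rw [Fintype.sum_eq_single i (fun k hk => by rw [hv k hk, zero_mul])] at hvw
  have hij : i ≠ j := by
    rintro rfl
    have : v i ^ 2 * w i ^ 2 = 0 := by rw [← mul_pow, hvw]; rfl
    rw [hvi, hwj] at this
    omega
  have ai : a i ^ 2 = 1 := by
    have : a i ^ 2 * v i ^ 2 = 1 := by rw [← mul_pow, hav]; rfl
    rwa [hvi, mul_one] at this
  have aj : a j ^ 2 = 1 := by
    have : a j ^ 2 * w j ^ 2 = 1 := by rw [← mul_pow, haw]; rfl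
    rwa [hwj, mul_one] at this
  have ev : ∀ k, k ≠ i → k ≠ j → a k % 2 = 0 := fun k h1 h2 => by
    rw [hpar k, hv k h1, hw k h2]; rfl
  -- Remove the terms `i` and `j` and enumerate the other three.
  rw [← Finset.add_sum_erase _ _ (Finset.mem_univ i),
    ← Finset.add_sum_erase _ _ (show j ∈ Finset.univ.erase i by simp [hij.symm]), ai, aj] at A30
  have hcard : ((Finset.univ.erase i).erase j).card = 3 := by
    rw [Finset.card_erase_of_mem (by simp [hij.symm]), Finset.card_erase_of_mem (by simp)]
    rfl
  obtain ⟨x, y, z, hxy, hxz, hyz, hS⟩ := Finset.card_eq_three.1 hcard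
  have hev : ∀ k ∈ ({x, y, z} : Finset (Fin 5)), a k % 2 = 0 := by
    intro k hk
    rw [← hS] at hk
    simp only [Finset.mem_erase, Finset.mem_univ, and_true] at hk
    exact ev k hk.2 hk.1
  rw [hS, Finset.sum_insert (by simp [hxy, hxz]), Finset.sum_pair hyz] at A30
  exact not_three_even_squares (a x) (a y) (a z) (hev x (by simp)) (hev y (by simp))
    (hev z (by simp)) (by linarith)

/-! ### The length of the element -/

lemma not_five (p q : ℕ) (hp : Squarefree p) (hq : Squarefree q) (hcop : Nat.Coprime p q)
    (hp4 : p % 4 = 1) (hq4 : q % 4 = 1) (hp17 : 17 ≤ p) (hq17 : 17 ≤ q) :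
    ¬ SumOfNSquaresIn (ringOfInt (biqField p q)) 5
      (7 + ((1 + Real.sqrt p) / 2) ^ 2 + ((1 + Real.sqrt q) / 2) ^ 2) := by
  rintro ⟨x, hx, hsum⟩
  have hp1 : 1 < p := by omega
  have hq1 : 1 < q := by omega
  have np := not_sq_of_squarefree p hp hp1
  have nq := not_sq_of_squarefree q hq hq1
  have npq := not_sq_of_squarefree (p * q) ((Nat.squarefree_mul hcop).2 ⟨hp, hq⟩) (by nlinarith)
  have hsp : √(p:ℝ) ^ 2 = p := Real.sq_sqrt (by positivity)
  have hsq : √(q:ℝ) ^ 2 = q := Real.sq_sqrt (by positivity)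
  have hp' : (17 : ℤ) ≤ p := by exact_mod_cast hp17
  have hq' : (17 : ℤ) ≤ q := by exact_mod_cast hq17
  choose a b c d hxe hab hac had using
    fun i => integral_coeffs p q hp hq hcop hp4 hq4 hp1 hq1 (x i) (hx i)
  have hexp : ∀ i, 16 * x i ^ 2 = ((a i ^ 2 + p * b i ^ 2 + q * c i ^ 2 + p * q * d i ^ 2 : ℤ) : ℝ)
      + ((2 * (a i * b i + q * (c i * d i)) : ℤ) : ℝ) * √p
      + ((2 * (a i * c i + p * (b i * d i)) : ℤ) : ℝ) * √q
      + ((2 * (a i * d i + b i * c i) : ℤ) : ℝ) * (√p * √q) := by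
    intro i
    have : 16 * x i ^ 2 = (4 * x i) ^ 2 := by ring
    rw [this, hxe i]
    push_cast
    linear_combination
      ((b i : ℝ) ^ 2 + 2 * b i * d i * √(q : ℝ) + d i ^ 2 * √(q : ℝ) ^ 2) * hsp +
      ((c i : ℝ) ^ 2 + 2 * c i * d i * √(p : ℝ) + d i ^ 2 * p) * hsq
  have htot : (16 : ℝ) * (7 + ((1 + √p) / 2) ^ 2 + ((1 + √q) / 2) ^ 2) =
      ((∑ i, (a i ^ 2 + p * b i ^ 2 + q * c i ^ 2 + p * q * d i ^ 2) : ℤ) : ℝ)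
      + ((∑ i, 2 * (a i * b i + q * (c i * d i)) : ℤ) : ℝ) * √p
      + ((∑ i, 2 * (a i * c i + p * (b i * d i)) : ℤ) : ℝ) * √q
      + ((∑ i, 2 * (a i * d i + b i * c i) : ℤ) : ℝ) * (√p * √q) := by
    rw [hsum, Finset.mul_sum, Finset.sum_congr rfl (fun i _ => hexp i)]
    rw [Finset.sum_add_distrib, Finset.sum_add_distrib, Finset.sum_add_distrib, ← Finset.sum_mul,
      ← Finset.sum_mul, ← Finset.sum_mul]
    simp only [Int.cast_sum]
  obtain ⟨E1, E2, E3, E4⟩ := biq_indep p q np nq npq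
    (((∑ i, (a i ^ 2 + p * b i ^ 2 + q * c i ^ 2 + p * q * d i ^ 2)) - (120 + 4 * p + 4 * q) : ℤ) : ℚ)
    (((∑ i, 2 * (a i * b i + q * (c i * d i))) - 8 : ℤ) : ℚ)
    (((∑ i, 2 * (a i * c i + p * (b i * d i))) - 8 : ℤ) : ℚ)
    ((∑ i, 2 * (a i * d i + b i * c i) : ℤ) : ℚ) (by
      simp only [Rat.cast_intCast]
      rw [Int.cast_sub _ (120 + 4 * p + 4 * q : ℤ), Int.cast_sub _ (8 : ℤ), Int.cast_sub _ (8 : ℤ)]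
      have e : ((120 + 4 * p + 4 * q : ℤ) : ℝ) = 120 + 4 * p + 4 * q := by push_cast; ring
      have e8 : ((8 : ℤ) : ℝ) = 8 := by norm_num
      rw [e, e8]
      linear_combination -htot + 4 * hsp + 4 * hsq)
  have F1 : ∑ i, (a i ^ 2 + p * b i ^ 2 + q * c i ^ 2 + p * q * d i ^ 2) =
      (120 + 4 * p + 4 * q : ℤ) := sub_eq_zero.1 (by exact_mod_cast E1)
  have F2 : ∑ i, 2 * (a i * b i + q * (c i * d i)) = (8 : ℤ) := sub_eq_zero.1 (by exact_mod_cast E2)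
  have F3 : ∑ i, 2 * (a i * c i + p * (b i * d i)) = (8 : ℤ) := sub_eq_zero.1 (by exact_mod_cast E3)
  have F4 : ∑ i, 2 * (a i * d i + b i * c i) = (0 : ℤ) := by exact_mod_cast E4
  clear E1 E2 E3 E4 htot hexp
  -- `pq > 120 + 4p + 4q` forces `d = 0`.
  have hd : ∀ i, d i = 0 := by
    intro i
    by_contra hne
    have h1 : 1 ≤ d i ^ 2 := by have := sq_pos_of_ne_zero hne; omega
    have h2 := Finset.single_le_sum
      (f := fun i => a i ^ 2 + p * b i ^ 2 + q * c i ^ 2 + p * q * d i ^ 2)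
      (fun i _ => by positivity) (Finset.mem_univ i)
    rw [F1] at h2
    have h3 : (0 : ℤ) ≤ a i ^ 2 + p * b i ^ 2 + q * c i ^ 2 := by positivity
    have h4 : (p * q : ℤ) ≤ p * q * d i ^ 2 := le_mul_of_one_le_right (by positivity) h1
    nlinarith [mul_nonneg (sub_nonneg.2 hp') (sub_nonneg.2 hq')]
  have hev : ∀ i, ∃ A V W : ℤ, a i = 2 * A ∧ b i = 2 * V ∧ c i = 2 * W := by
    intro i
    have h1 := hab i
    have h2 := hac i
    have h3 := had i
    rw [hd i] at h3
    exact ⟨a i / 2, b i / 2, c i / 2, by omega, by omega, by omega⟩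
  choose A V W hA hV hW using hev
  simp only [hd, hA, hV, hW] at F1 F2 F3 F4 hxe
  refine no_five p q hp17 hq17 A V W (fun i => ?_) ?_ ?_ ?_ ?_
  · refine parity_of_integral p q hp4 hq4 (x i) (hx i).2 _ _ _ ?_
    have := hxe i
    push_cast at this
    linear_combination this / 2
  · simp only [Fin.sum_univ_five] at F1 ⊢; linarith
  · simp only [Fin.sum_univ_five] at F2 ⊢; linarith
  · simp only [Fin.sum_univ_five] at F3 ⊢; linarith
  · simp only [Fin.sum_univ_five] at F4 ⊢; linarith

lemma six_squares (p q : ℕ) (hp4 : p % 4 = 1) (hq4 : q % 4 = 1) :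
    SumOfNSquaresIn (ringOfInt (biqField p q)) 6
      (7 + ((1 + Real.sqrt p) / 2) ^ 2 + ((1 + Real.sqrt q) / 2) ^ 2) := by
  have h1 : (1 : ℝ) ∈ ringOfInt (biqField p q) := ⟨one_mem _, isIntegral_one⟩
  have h2 : (2 : ℝ) ∈ ringOfInt (biqField p q) :=
    ⟨by exact_mod_cast rat_mem _ (2 : ℚ),
      by simpa using isIntegral_algebraMap (R := ℤ) (A := ℝ) (x := 2)⟩
  refine ⟨![2, 1, 1, 1, (1 + √p) / 2, (1 + √q) / 2], ?_, ?_⟩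
  · intro i
    fin_cases i
    exacts [h2, h1, h1, h1, half_mem p q p hp4 (sqrt_mem_left p q),
      half_mem p q q hq4 (sqrt_mem_right p q)]
  · simp [Fin.sum_univ_six]; ring

/-- For coprime squarefree `p ≡ q ≡ 1 (mod 4)` with `p, q ≥ 17` and
`K = ℚ(√p, √q)`, the element `7 + ((1+√p)/2)² + ((1+√q)/2)²` is a sum of `6` squares
in `O_K` but not of `5`; in particular `P(O_K) ≥ 6`. -/
theorem length_six_element_B4
    (p q : ℕ) (hp : Squarefree p) (hq : Squarefree q) (hcop : Nat.Coprime p q)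
    (hp4 : p % 4 = 1) (hq4 : q % 4 = 1) (hp17 : 17 ≤ p) (hq17 : 17 ≤ q) :
    SumOfNSquaresIn (ringOfInt (biqField p q)) 6
      (7 + ((1 + Real.sqrt p) / 2) ^ 2 + ((1 + Real.sqrt q) / 2) ^ 2) ∧
    ¬ SumOfNSquaresIn (ringOfInt (biqField p q)) 5
      (7 + ((1 + Real.sqrt p) / 2) ^ 2 + ((1 + Real.sqrt q) / 2) ^ 2) ∧
    (∃ α ∈ ringOfInt (biqField p q), IsSumOfSquaresIn (ringOfInt (biqField p q)) α ∧
      ¬ SumOfNSquaresIn (ringOfInt (biqField p q)) 5 α) := by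
  have h6 := six_squares p q hp4 hq4
  have h5 := not_five p q hp hq hcop hp4 hq4 hp17 hq17
  refine ⟨h6, h5, _, ⟨?_, ?_⟩, ⟨6, h6⟩, h5⟩
  · exact add_mem (add_mem (by exact_mod_cast rat_mem _ (7 : ℚ))
      (pow_mem (half_mem p q p hp4 (sqrt_mem_left p q)).1 2))
      (pow_mem (half_mem p q q hq4 (sqrt_mem_right p q)).1 2)
  · have h7 : IsIntegral ℤ (7 : ℝ) := by
      simpa using isIntegral_algebraMap (R := ℤ) (A := ℝ) (x := 7)
    exact (h7.add ((half_integral p hp4).pow 2)).add ((half_integral q hq4).pow 2)
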